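/- Let γ>1, let U_l ≠ U_r be states with v_l, v_r > 0, and let 0 < a < 1. Suppose W : [0,1) → (0,∞)×ℝ⁵ is a continuous curve with W(0) = U_l whose first component v(s) tends to 0 as s → 1⁻. Then there exists s ∈ (0,1) such that η(W(s)|U_l) = a·η(W(s)|U_r). (That is, any continuous curve from U_l along which the specific volume tends to 0 must intersect the surface Σ_a = {U : η(U|U_l) = a·η(U|U_r)}.) -/

import Mathlib

/-- The entropy `η(U) = v^(1-γ)/(γ-1) + ½(u₁²+u₂²+u₃²) + (q₂²+q₃²)/(2v)` of planar isentropic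
MHD, in conservative variables `U = (v,q₂,q₃,u₁,u₂,u₃)`. -/
noncomputable def mhdEntropy (γ : ℝ) (U : Fin 6 → ℝ) : ℝ :=
  (U 0) ^ (1 - γ) / (γ - 1) + (U 3 ^ 2 + U 4 ^ 2 + U 5 ^ 2) / 2 + (U 1 ^ 2 + U 2 ^ 2) / (2 * U 0)

/-- The gradient `∇η(U) = (−v^(−γ) − (q₂²+q₃²)/(2v²), q₂/v, q₃/v, u₁, u₂, u₃)`. -/
noncomputable def mhdEntropyGrad (γ : ℝ) (U : Fin 6 → ℝ) : Fin 6 → ℝ :=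
  ![-(U 0) ^ (-γ) - (U 1 ^ 2 + U 2 ^ 2) / (2 * U 0 ^ 2), U 1 / U 0, U 2 / U 0, U 3, U 4, U 5]

/-- The relative entropy `η(U|V) = η(U) − η(V) − ∇η(V)·(U − V)`. -/
noncomputable def mhdRelEntropy (γ : ℝ) (U V : Fin 6 → ℝ) : ℝ :=
  mhdEntropy γ U - mhdEntropy γ V - ∑ i : Fin 6, mhdEntropyGrad γ V i * (U i - V i)

/-!
The function `F U = η(U|U_l) - a η(U|U_r)`, whose zero set is `Σ_a`, is negative at `U_l` because
the relative entropy is positive off the diagonal (Bernoulli's inequality for the internal energy,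
sums of squares for the rest). At the other end of the curve, `F` is `(1 - a) η` minus an affine
function, hence `(1 - a) η(·|V)` plus an affine function for every reference state `V`. Choosing `V`
so that this affine function depends on `v` only, `F` is bounded below by
`(1 - a) v^(1-γ) / (γ-1)` plus an affine function of `v`, which blows up as `v → 0⁺` no matter how
the other components behave. The intermediate value theorem gives the crossing.
-/

open Filter Set Topology

/-- The relative entropy of the internal energy `v ↦ v^(1-γ)/(γ-1)` alone: the contribution of the
specific volume to `mhdRelEntropy`. -/
noncomputable def internalRelEnergy (γ v w : ℝ) : ℝ :=
  v ^ (1 - γ) / (γ - 1) - w ^ (1 - γ) / (γ - 1) + w ^ (-γ) * (v - w)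

/-- The function `U ↦ η(U|U_l) - a η(U|U_r)`, which vanishes exactly on the surface `Σ_a`. -/
noncomputable def mhdRelEntropyDiff (γ a : ℝ) (Ul Ur U : Fin 6 → ℝ) : ℝ :=
  mhdRelEntropy γ U Ul - a * mhdRelEntropy γ U Ur

section InternalEnergy

variable {γ v w : ℝ}

theorem internalRelEnergy_self (γ v : ℝ) : internalRelEnergy γ v v = 0 := by
  simp [internalRelEnergy]

theorem internalRelEnergy_eq_mul (hγ : γ ≠ 1) (hv : 0 < v) (hw : 0 < w) :
    internalRelEnergy γ v w =
      v / (w ^ γ * (γ - 1)) * ((w / v) ^ γ - (1 + γ * (w / v - 1))) := by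
  have hγ' : γ - 1 ≠ 0 := sub_ne_zero.2 hγ
  have hvγ : v ^ γ ≠ 0 := (Real.rpow_pos_of_pos hv γ).ne'
  have hwγ : w ^ γ ≠ 0 := (Real.rpow_pos_of_pos hw γ).ne'
  rw [internalRelEnergy, Real.div_rpow hw.le hv.le, Real.rpow_sub hv, Real.rpow_sub hw,
    Real.rpow_one, Real.rpow_one, Real.rpow_neg hw.le]
  field_simp
  ring

theorem internalRelEnergy_pos (hγ : 1 < γ) (hv : 0 < v) (hw : 0 < w) (hne : v ≠ w) :
    0 < internalRelEnergy γ v w := by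
  have : 0 < γ - 1 := sub_pos.2 hγ
  have hratio : w / v - 1 ≠ 0 := by
    rwa [sub_ne_zero, Ne, div_eq_one_iff_eq hv.ne', eq_comm]
  have bernoulli : 1 + γ * (w / v - 1) < (w / v) ^ γ := by
    have hratio_pos : 0 < w / v := div_pos hw hv
    simpa only [add_sub_cancel] using
      one_add_mul_self_lt_rpow_one_add (by linarith) hratio hγ
  rw [internalRelEnergy_eq_mul hγ.ne' hv hw]
  exact mul_pos (by positivity) (sub_pos.2 bernoulli)

theorem tendsto_internalRelEnergy_nhdsGT_zero (hγ : 1 < γ) (w : ℝ) :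
    Tendsto (fun v => internalRelEnergy γ v w) (𝓝[>] 0) atTop := by
  have hblow : Tendsto (fun v : ℝ => v ^ (1 - γ) / (γ - 1)) (𝓝[>] 0) atTop :=
    (tendsto_rpow_neg_nhdsGT_zero (sub_neg.2 hγ)).atTop_div_const (sub_pos.2 hγ)
  have haffine : Continuous fun v : ℝ => -(w ^ (1 - γ) / (γ - 1)) + w ^ (-γ) * (v - w) := by
    fun_prop
  refine (hblow.atTop_add ((haffine.tendsto 0).mono_left nhdsWithin_le_nhds)).congr fun v => ?_
  rw [internalRelEnergy]
  ring

end InternalEnergy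

section RelativeEntropy

variable {γ : ℝ} {U V : Fin 6 → ℝ}

theorem mhdRelEntropy_self (γ : ℝ) (U : Fin 6 → ℝ) : mhdRelEntropy γ U U = 0 := by
  simp [mhdRelEntropy]

theorem mhdRelEntropy_eq_internalRelEnergy_add (γ : ℝ) (hU : U 0 ≠ 0) (hV : V 0 ≠ 0) :
    mhdRelEntropy γ U V =
      internalRelEnergy γ (U 0) (V 0)
      + ((U 3 - V 3) ^ 2 + (U 4 - V 4) ^ 2 + (U 5 - V 5) ^ 2) / 2
      + U 0 / 2 * ((U 1 / U 0 - V 1 / V 0) ^ 2 + (U 2 / U 0 - V 2 / V 0) ^ 2) := by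
  have hmagnetic (p q : ℝ) : p ^ 2 / (2 * U 0) - q ^ 2 / (2 * V 0) - q / V 0 * (p - q)
      + q ^ 2 / (2 * V 0 ^ 2) * (U 0 - V 0) = U 0 / 2 * (p / U 0 - q / V 0) ^ 2 := by
    field_simp
    ring
  simp only [mhdRelEntropy, mhdEntropy, mhdEntropyGrad, internalRelEnergy, Fin.sum_univ_six,
    Matrix.cons_val]
  linear_combination hmagnetic (U 1) (V 1) + hmagnetic (U 2) (V 2)

theorem internalRelEnergy_le_mhdRelEntropy (γ : ℝ) (hU : 0 < U 0) (hV : V 0 ≠ 0) :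
    internalRelEnergy γ (U 0) (V 0) ≤ mhdRelEntropy γ U V := by
  rw [mhdRelEntropy_eq_internalRelEnergy_add γ hU.ne' hV, add_assoc]
  exact le_add_of_nonneg_right (by positivity)

theorem mhdRelEntropy_pos (hγ : 1 < γ) (hU : 0 < U 0) (hV : 0 < V 0) (hne : U ≠ V) :
    0 < mhdRelEntropy γ U V := by
  rcases ne_or_eq (U 0) (V 0) with hvol | hvol
  · exact (internalRelEnergy_pos hγ hU hV hvol).trans_le
      (internalRelEnergy_le_mhdRelEntropy γ hU hV.ne')
  have hfield {p q : ℝ} (hpq : p ≠ q) : p / V 0 - q / V 0 ≠ 0 :=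
    sub_ne_zero.2 fun h => hpq ((div_left_inj' hV.ne').1 h)
  rw [mhdRelEntropy_eq_internalRelEnergy_add γ hU.ne' hV.ne', hvol, internalRelEnergy_self,
    zero_add]
  obtain ⟨i, hi⟩ := Function.ne_iff.1 hne
  fin_cases i
  · exact absurd hvol hi
  · have := hfield hi
    positivity
  · have := hfield hi
    positivity
  · have : U 3 - V 3 ≠ 0 := sub_ne_zero.2 hi
    positivity
  · have : U 4 - V 4 ≠ 0 := sub_ne_zero.2 hi
    positivity
  · have : U 5 - V 5 ≠ 0 := sub_ne_zero.2 hi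
    positivity

theorem continuousOn_mhdEntropy (γ : ℝ) : ContinuousOn (mhdEntropy γ) {U | U 0 ≠ 0} := by
  unfold mhdEntropy
  have hpow : ContinuousOn (fun U : Fin 6 → ℝ => U 0 ^ (1 - γ)) {U | U 0 ≠ 0} :=
    (continuous_apply 0).continuousOn.rpow_const fun _ hU => Or.inl hU
  have hmagnetic : ContinuousOn (fun U : Fin 6 → ℝ => (U 1 ^ 2 + U 2 ^ 2) / (2 * U 0))
      {U | U 0 ≠ 0} :=
    ContinuousOn.div (by fun_prop) (by fun_prop) fun _ hU => mul_ne_zero two_ne_zero hU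
  fun_prop

theorem continuousOn_mhdRelEntropy (γ : ℝ) (V : Fin 6 → ℝ) :
    ContinuousOn (fun U => mhdRelEntropy γ U V) {U | U 0 ≠ 0} := by
  have := continuousOn_mhdEntropy γ
  unfold mhdRelEntropy
  fun_prop

end RelativeEntropy

section RelativeEntropyDiff

variable {γ a : ℝ} (Ul Ur : Fin 6 → ℝ)

theorem continuousOn_mhdRelEntropyDiff (γ a : ℝ) :
    ContinuousOn (mhdRelEntropyDiff γ a Ul Ur) {U | U 0 ≠ 0} :=
  (continuousOn_mhdRelEntropy γ Ul).sub ((continuousOn_mhdRelEntropy γ Ur).const_mul a)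

theorem mhdRelEntropyDiff_left_neg {Ul Ur : Fin 6 → ℝ} (hγ : 1 < γ) (ha : 0 < a)
    (hvl : 0 < Ul 0) (hvr : 0 < Ur 0) (hne : Ul ≠ Ur) : mhdRelEntropyDiff γ a Ul Ur Ul < 0 := by
  rw [mhdRelEntropyDiff, mhdRelEntropy_self, zero_sub, neg_lt_zero]
  exact mul_pos ha (mhdRelEntropy_pos hγ hvl hvr hne)

theorem mhdRelEntropyDiff_eq_relEntropy_add_affine (γ a : ℝ) (U V : Fin 6 → ℝ) :
    mhdRelEntropyDiff γ a Ul Ur U =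
      (1 - a) * mhdRelEntropy γ U V
      + ∑ i, ((1 - a) * mhdEntropyGrad γ V i
          - (mhdEntropyGrad γ Ul i - a * mhdEntropyGrad γ Ur i)) * (U i - V i)
      + mhdRelEntropyDiff γ a Ul Ur V := by
  simp only [mhdRelEntropyDiff, mhdRelEntropy, Fin.sum_univ_six]
  ring

theorem exists_mhdEntropyGrad_succ_eq (γ : ℝ) (p : Fin 5 → ℝ) :
    ∃ V : Fin 6 → ℝ, V 0 = 1 ∧ ∀ i : Fin 5, mhdEntropyGrad γ V i.succ = p i := by
  refine ⟨Fin.cons 1 p, rfl, fun i => ?_⟩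
  fin_cases i <;> simp [mhdEntropyGrad] <;> rfl

theorem exists_internalRelEnergy_add_affine_le_mhdRelEntropyDiff (γ : ℝ) (ha : a < 1) :
    ∃ c d : ℝ, ∀ U : Fin 6 → ℝ, 0 < U 0 →
      (1 - a) * internalRelEnergy γ (U 0) 1 + (c * (U 0 - 1) + d)
        ≤ mhdRelEntropyDiff γ a Ul Ur U := by
  have ha' : 0 < 1 - a := sub_pos.2 ha
  obtain ⟨V, hV0, hV⟩ := exists_mhdEntropyGrad_succ_eq γ fun i =>
    (mhdEntropyGrad γ Ul i.succ - a * mhdEntropyGrad γ Ur i.succ) / (1 - a)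
  refine ⟨(1 - a) * mhdEntropyGrad γ V 0 - (mhdEntropyGrad γ Ul 0 - a * mhdEntropyGrad γ Ur 0),
    mhdRelEntropyDiff γ a Ul Ur V, fun U hU => ?_⟩
  have hle : internalRelEnergy γ (U 0) 1 ≤ mhdRelEntropy γ U V :=
    hV0 ▸ internalRelEnergy_le_mhdRelEntropy γ hU (hV0 ▸ one_ne_zero)
  rw [mhdRelEntropyDiff_eq_relEntropy_add_affine Ul Ur γ a U V, Fin.sum_univ_succ]
  simp only [hV, mul_div_cancel₀ _ ha'.ne', sub_self, zero_mul, Finset.sum_const_zero, add_zero,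
    hV0, add_assoc]
  gcongr

theorem tendsto_mhdRelEntropyDiff_atTop (hγ : 1 < γ) (ha : a < 1) :
    Tendsto (mhdRelEntropyDiff γ a Ul Ur) (comap (fun U => U 0) (𝓝[>] 0)) atTop := by
  obtain ⟨c, d, hle⟩ := exists_internalRelEnergy_add_affine_le_mhdRelEntropyDiff Ul Ur γ ha
  have haffine : Continuous fun v : ℝ => c * (v - 1) + d := by fun_prop
  have hblow : Tendsto (fun v => (1 - a) * internalRelEnergy γ v 1 + (c * (v - 1) + d))
      (𝓝[>] 0) atTop :=
    ((tendsto_internalRelEnergy_nhdsGT_zero hγ 1).const_mul_atTop (sub_pos.2 ha)).atTop_add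
      ((haffine.tendsto 0).mono_left nhdsWithin_le_nhds)
  have hpos : ∀ᶠ U : Fin 6 → ℝ in comap (fun U => U 0) (𝓝[>] 0), 0 < U 0 :=
    tendsto_comap.eventually self_mem_nhdsWithin
  exact tendsto_atTop_mono' _ (hpos.mono hle) (hblow.comp tendsto_comap)

end RelativeEntropyDiff

/-- For `γ > 1`, states `U_l ≠ U_r` with `v_l, v_r > 0`, and `0 < a < 1`: any
continuous curve `W : [0,1) → (0,∞)×ℝ⁵` with `W(0) = U_l` whose specific volume tends to `0`
as `s → 1⁻` must intersect the surface `Σ_a = {U : η(U|U_l) = a·η(U|U_r)}` at some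
`s ∈ (0,1)`. -/
theorem mhd_curve_meets_sigma_a
    (γ a : ℝ) (hγ : 1 < γ) (ha0 : 0 < a) (ha1 : a < 1)
    (Ul Ur : Fin 6 → ℝ) (hvl : 0 < Ul 0) (hvr : 0 < Ur 0) (hne : Ul ≠ Ur)
    (W : ℝ → Fin 6 → ℝ)
    (hW0 : W 0 = Ul)
    (hWpos : ∀ s ∈ Set.Ico (0 : ℝ) 1, 0 < W s 0)
    (hWcont : ContinuousOn W (Set.Ico (0 : ℝ) 1))
    (hWlim : Filter.Tendsto (fun s => W s 0) (nhdsWithin 1 (Set.Iio 1)) (nhds 0)) :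
    ∃ s ∈ Set.Ioo (0 : ℝ) 1,
      mhdRelEntropy γ (W s) Ul = a * mhdRelEntropy γ (W s) Ur := by
  have hIco : ∀ᶠ s in 𝓝[<] (1 : ℝ), s ∈ Ico (0 : ℝ) 1 := Ico_mem_nhdsLT one_pos
  have hvol : Tendsto W (𝓝[<] 1) (comap (fun U => U 0) (𝓝[>] 0)) :=
    tendsto_comap_iff.2 (tendsto_nhdsWithin_iff.2 ⟨hWlim, hIco.mono hWpos⟩)
  have hblow : Tendsto (fun s => mhdRelEntropyDiff γ a Ul Ur (W s)) (𝓝[<] 1) atTop :=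
    (tendsto_mhdRelEntropyDiff_atTop Ul Ur hγ ha1).comp hvol
  have hcont : ContinuousOn (fun s => mhdRelEntropyDiff γ a Ul Ur (W s)) (Ico 0 1) :=
    (continuousOn_mhdRelEntropyDiff Ul Ur γ a).comp hWcont fun s hs => (hWpos s hs).ne'
  have hneg : mhdRelEntropyDiff γ a Ul Ur (W 0) < 0 :=
    hW0.symm ▸ mhdRelEntropyDiff_left_neg hγ ha0 hvl hvr hne
  obtain ⟨s, hs, hzero⟩ := isPreconnected_Ico.intermediate_value_Ici
    (left_mem_Ico.2 one_pos) (le_principal_iff.2 hIco) hcont hblow hneg.le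
  have hs0 : s ≠ 0 := by
    rintro rfl
    exact hneg.ne hzero
  exact ⟨s, ⟨hs.1.lt_of_ne' hs0, hs.2⟩, sub_eq_zero.1 hzero⟩
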